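/- Airy asymptotics on the left: there is an absolute constant C such that for every t > 0 and every real-valued tempered distribution u whose profile ũ(p) = e^{−itp³} û(p) satisfies ũ ∈ L^∞(ℝ) and ∂_p ũ ∈ L²((0, ∞)), for all x < −t^{1/3}: |u(x) − t^{−1/3} Re[Ai(x/t^{1/3}) ũ(√(|x|/3t))]| ≤ C t^{−1/3} ⟨|x|/t^{1/3}⟩^{−3/10} ‖u‖_{E(t)}. -/

import Mathlib

open MeasureTheory Set Filter Topology

noncomputable section

namespace MKdVPaper

/-- The Japanese bracket `⟨y⟩ = √(1+y²)`. -/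
def jap (y : ℝ) : ℝ := Real.sqrt (1 + y ^ 2)

/-- Truncated Fourier-type integral recovering the physical function from a profile `w`:
`(1/π) Re ∫_0^R e^{i(px + p³ t)} w(p) dp`. -/
def physPartial (w : ℝ → ℂ) (t x R : ℝ) : ℝ :=
  (1 / Real.pi) *
    (∫ p in Ioc (0 : ℝ) R, Complex.exp (Complex.I * ((p * x + p ^ 3 * t : ℝ) : ℂ)) * w p).re

/-- `u` is the physical-space function associated with the profile `w` at time `t`, i.e.
`u(x) = (1/π) Re ∫_0^∞ e^{i(px + p³t)} w(p) dp` as an improper integral. -/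
def IsPhys (w : ℝ → ℂ) (t : ℝ) (u : ℝ → ℝ) : Prop :=
  ∀ x : ℝ, Tendsto (fun R => physPartial w t x R) atTop (𝓝 (u x))

/-- Sup norm of a profile. -/
def supN (w : ℝ → ℂ) : ℝ := ⨆ p : ℝ, ‖w p‖

/-- `L²((0,∞))` norm of the derivative of the profile. -/
def dL2 (w : ℝ → ℂ) : ℝ := (eLpNorm (deriv w) 2 (volume.restrict (Ioi 0))).toReal

/-- The `E(t)` norm: `‖ũ‖_{L^∞} + t^{-1/6} ‖∂_p ũ‖_{L²((0,∞))}`. -/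
def EnormP (t : ℝ) (w : ℝ → ℂ) : ℝ := supN w + t ^ (-(1 / 6 : ℝ)) * dL2 w

/-- Membership conditions for `E(t)` on the profile side: profile of a real-valued
distribution, bounded and continuous on `(0,∞)`, with derivative in `L²((0,∞))`. -/
structure MemE (w : ℝ → ℂ) : Prop where
  symm : ∀ p : ℝ, w (-p) = starRingEnd ℂ (w p)
  cont : ContinuousOn w (Ioi 0)
  bdd : BddAbove (range fun p : ℝ => ‖w p‖)
  diff : ∀ p ∈ Ioi (0 : ℝ), DifferentiableAt ℝ w p
  derivL2 : MemLp (deriv w) 2 (volume.restrict (Ioi 0))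

/-- A space-time function of class `E(I)`: a physical function `u` together with its
profile `w(t,p) = e^{-itp³} û(t,p)`. -/
structure ESol (I : Set ℝ) where
  u : ℝ → ℝ → ℝ
  w : ℝ → ℝ → ℂ
  memE : ∀ t ∈ I, MemE (w t)
  isPhys : ∀ t ∈ I, IsPhys (w t) t (u t)
  contt : ContinuousOn (fun q : ℝ × ℝ => w q.1 q.2) (I ×ˢ Ioi 0)

/-- Finiteness of the `E(I)` norm: `sup_{t ∈ I} ‖u(t)‖_{E(t)} < ∞`. -/
def FiniteEnorm (I : Set ℝ) (sol : ESol I) : Prop :=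
  BddAbove ((fun t => EnormP t (sol.w t)) '' I)

/-- Time derivative of a test function. -/
def dt1 (φ : ℝ → ℝ → ℝ) : ℝ → ℝ → ℝ := fun t x => deriv (fun s => φ s x) t

/-- Space derivative of a test function. -/
def dx1 (φ : ℝ → ℝ → ℝ) : ℝ → ℝ → ℝ := fun t x => deriv (fun y => φ t y) x

/-- `u` is a distributional solution of `∂ₜ u + ∂ₓ³ u + ε ∂ₓ(u³) = 0` on `I × ℝ`. -/
def IsSolOn (ε : ℝ) (u : ℝ → ℝ → ℝ) (I : Set ℝ) : Prop :=
  ∀ φ : ℝ → ℝ → ℝ,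
    ContDiff ℝ (⊤ : ℕ∞) (fun q : ℝ × ℝ => φ q.1 q.2) →
    HasCompactSupport (fun q : ℝ × ℝ => φ q.1 q.2) →
    tsupport (fun q : ℝ × ℝ => φ q.1 q.2) ⊆ interior I ×ˢ univ →
    (∫ q : ℝ × ℝ,
      (u q.1 q.2 * (dt1 φ q.1 q.2 + dx1 (dx1 (dx1 φ)) q.1 q.2)
        + ε * u q.1 q.2 ^ 3 * dx1 φ q.1 q.2)) = 0

/-- Self-similar solution: `S(t,x) = t^{-1/3} V(t^{-1/3} x)`. -/
def SelfSimilar {I : Set ℝ} (S : ESol I) : Prop :=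
  ∃ V : ℝ → ℝ, ∀ t ∈ I, ∀ x : ℝ,
    S.u t x = t ^ (-(1 / 3 : ℝ)) * V (t ^ (-(1 / 3 : ℝ)) * x)

/-- The Fourier transform at time 1 recovered from the profile: `û(1,p) = e^{ip³} ũ(1,p)`. -/
def hatAtOne (w : ℝ → ℂ) : ℝ → ℂ := fun p => Complex.exp (Complex.I * ((p ^ 3 : ℝ) : ℂ)) * w p

/-- The Fourier transforms at time 1 have the same limit at frequency `0⁺`. -/
def SameZeroLimit (w₁ w₂ : ℝ → ℂ) : Prop :=
  ∃ c : ℂ, Tendsto (hatAtOne w₁) (𝓝[>] (0 : ℝ)) (𝓝 c) ∧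
    Tendsto (hatAtOne w₂) (𝓝[>] (0 : ℝ)) (𝓝 c)

/-- Truncated Airy–Fock integral. -/
def AiP (z R : ℝ) : ℂ :=
  ((1 / Real.pi : ℝ) : ℂ) *
    ∫ p in Ioc (0 : ℝ) R, Complex.exp (Complex.I * ((p * z + p ^ 3 : ℝ) : ℂ))

/-- The Airy–Fock function `Ai(z) = (1/π)∫_0^∞ e^{i(pz+p³)} dp` (improper integral). -/
def AiFock (z : ℝ) : ℂ := limUnder atTop fun R => AiP z R

end MKdVPaper
namespace MKdVPaper

/-- The oscillating factor `e^{i(px + p³t)}`. -/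
def osc (t x p : ℝ) : ℂ := Complex.exp (Complex.I * ((p * x + p ^ 3 * t : ℝ) : ℂ))

/-- The regularised denominator `1 + 3it(p-a)²(p+a)`, which equals `1 + i(p-a)φ'(p)` for the
phase `φ(p) = tp³ - 3ta²p`. -/
def den (t a p : ℝ) : ℂ := 1 + ((3 * t * (p - a) ^ 2 * (p + a) : ℝ) : ℂ) * Complex.I

/-- An approximate antiderivative of the oscillating factor `osc t (-3ta²)`. -/
def prim (t x a p : ℝ) : ℂ := osc t x p * ((p - a : ℝ) : ℂ) / den t a p

/-- The relative error of the approximate antiderivative `prim`. -/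
def err (t a p : ℝ) : ℂ :=
  -(((3 * t * (p - a) * (2 * (p - a) * (p + a) + (p - a) ^ 2) : ℝ) : ℂ) * Complex.I) /
    den t a p ^ 2

lemma norm_osc (t x p : ℝ) : ‖osc t x p‖ = 1 := by
  rw [osc, mul_comm, Complex.norm_exp_ofReal_mul_I]

lemma continuous_osc (t x : ℝ) : Continuous (osc t x) := by
  unfold osc; fun_prop

lemma den_ne_zero (t a p : ℝ) : den t a p ≠ 0 := by
  intro h
  have := congrArg Complex.re h
  simp [den, -Complex.ofReal_mul, -Complex.ofReal_pow] at this

lemma continuous_den (t a : ℝ) : Continuous (den t a) := by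
  unfold den; fun_prop

lemma continuous_prim (t x a : ℝ) : Continuous (prim t x a) := by
  unfold prim
  exact ((continuous_osc t x).mul (by fun_prop)).div (continuous_den t a) (den_ne_zero t a)

lemma continuous_err (t a : ℝ) : Continuous (err t a) := by
  unfold err
  exact Continuous.div (by fun_prop) ((continuous_den t a).pow 2)
    fun p => pow_ne_zero 2 (den_ne_zero t a p)

lemma hasDerivAt_prim {t x a : ℝ} (hx : x = -3 * t * a ^ 2) (p : ℝ) :
    HasDerivAt (prim t x a) (osc t x p * (1 + err t a p)) p := by
  have hosc : HasDerivAt (osc t x)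
      (osc t x p * (Complex.I * ((x + 3 * p ^ 2 * t : ℝ) : ℂ))) p := by
    have h : HasDerivAt (fun p : ℝ => p * x + p ^ 3 * t) (x + 3 * p ^ 2 * t) p := by
      have := ((hasDerivAt_id p).mul_const x).add (((hasDerivAt_id p).pow 3).mul_const t)
      refine this.congr_deriv ?_
      simp
    exact (h.ofReal_comp.const_mul Complex.I).cexp
  have hden : HasDerivAt (den t a)
      (((3 * t * (2 * (p - a) * (p + a) + (p - a) ^ 2) : ℝ) : ℂ) * Complex.I) p := by
    have h : HasDerivAt (fun p : ℝ => 3 * t * (p - a) ^ 2 * (p + a))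
        (3 * t * (2 * (p - a) * (p + a) + (p - a) ^ 2)) p := by
      have := ((((hasDerivAt_id p).sub_const a).pow 2).const_mul (3 * t)).mul
        ((hasDerivAt_id p).add_const a)
      refine this.congr_deriv ?_
      simp
      ring
    exact (h.ofReal_comp.mul_const Complex.I).const_add 1
  have hlin : HasDerivAt (fun p : ℝ => ((p - a : ℝ) : ℂ)) ((1 : ℝ) : ℂ) p :=
    ((hasDerivAt_id p).sub_const a).ofReal_comp
  refine ((hosc.mul hlin).div hden (den_ne_zero t a p)).congr_deriv ?_
  have hd := den_ne_zero t a p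
  have hd' : den t a p = 1 + ((3 * t * (p - a) ^ 2 * (p + a) : ℝ) : ℂ) * Complex.I := rfl
  simp only [err, Pi.mul_apply]
  field_simp
  rw [hd', hx]
  push_cast
  ring

lemma one_le_norm_den (t a p : ℝ) : 1 ≤ ‖den t a p‖ := by
  have h := Complex.abs_re_le_norm (den t a p)
  have h1 : (den t a p).re = 1 := by
    simp [den, -Complex.ofReal_mul, -Complex.ofReal_pow]
  simpa [h1] using h

lemma le_norm_den (t a p : ℝ) : 3 * t * (p - a) ^ 2 * (p + a) ≤ ‖den t a p‖ := by
  have h := (le_abs_self _).trans (Complex.abs_im_le_norm (den t a p))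
  have h1 : (den t a p).im = 3 * t * (p - a) ^ 2 * (p + a) := by
    simp [den, -Complex.ofReal_mul, -Complex.ofReal_pow]
  rwa [h1] at h

lemma norm_den_ge {t a p : ℝ} (ht : 0 < t) (ha : 0 < a) (hp : 0 ≤ p) :
    (1 + t * a * (p - a) ^ 2) / 2 ≤ ‖den t a p‖ := by
  have h1 := one_le_norm_den t a p
  have h2 := le_norm_den t a p
  have h3 : 0 ≤ t * (p - a) ^ 2 * p := by positivity
  have h4 : 0 ≤ t * (p - a) ^ 2 * a := by positivity
  nlinarith

lemma norm_prim (t x a p : ℝ) : ‖prim t x a p‖ = |p - a| / ‖den t a p‖ := by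
  rw [prim, norm_div, norm_mul, norm_osc, one_mul, Complex.norm_real, Real.norm_eq_abs]

lemma norm_prim_sq_le {t x a p : ℝ} (ht : 0 < t) (ha : 0 < a) (hp : 0 ≤ p) :
    ‖prim t x a p‖ ^ 2 ≤ 4 / (t * a) * (1 + t * a * (p - a) ^ 2)⁻¹ := by
  have h := norm_den_ge ht ha hp
  have hb : 0 < t * a := mul_pos ht ha
  have h0 : 0 < 1 + t * a * (p - a) ^ 2 := by positivity
  rw [norm_prim, div_pow, sq_abs]
  calc (p - a) ^ 2 / ‖den t a p‖ ^ 2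
      ≤ (p - a) ^ 2 / ((1 + t * a * (p - a) ^ 2) / 2) ^ 2 := by gcongr
    _ ≤ 4 / (t * a) * (1 + t * a * (p - a) ^ 2)⁻¹ := by
        rw [← div_eq_mul_inv, div_div, div_le_div_iff₀ (by positivity) (by positivity)]
        nlinarith

lemma norm_prim_le_of_far {t x a p : ℝ} (ht : 0 < t) (ha : 0 < a) (hp : 0 ≤ p)
    (hpa : a / 2 ≤ |p - a|) : ‖prim t x a p‖ ≤ 1 / (t * a ^ 2) := by
  have h2 := le_norm_den t a p
  have h0 : 0 < ‖den t a p‖ := norm_pos_iff.2 (den_ne_zero t a p)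
  rw [norm_prim, div_le_div_iff₀ h0 (by positivity)]
  have h3 : |p - a| * (t * a ^ 2) ≤ 3 * t * |p - a| ^ 2 * (p + a) := by
    have : t * |p - a| * (a * a) ≤ t * |p - a| * (3 * |p - a| * (p + a)) := by
      gcongr
      · linarith
      · linarith
    nlinarith
  rw [sq_abs] at h3
  linarith

lemma norm_err_le {t a p : ℝ} (ht : 0 < t) (ha : 0 < a) (hp : 0 ≤ p) :
    ‖err t a p‖ ≤ 6 * (1 + t * a * (p - a) ^ 2)⁻¹ := by
  have h1 := norm_den_ge ht ha hp
  have h2 := le_norm_den t a p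
  have h0 : 0 < ‖den t a p‖ := norm_pos_iff.2 (den_ne_zero t a p)
  have hb : 0 < 1 + t * a * (p - a) ^ 2 := by positivity
  have hnum : |3 * t * (p - a) * (2 * (p - a) * (p + a) + (p - a) ^ 2)| ≤ 3 * ‖den t a p‖ := by
    have e : 3 * t * (p - a) * (2 * (p - a) * (p + a) + (p - a) ^ 2)
        = 3 * t * (p - a) ^ 2 * (3 * p + a) := by ring
    rw [e, abs_of_nonneg (by positivity)]
    have : 0 ≤ t * (p - a) ^ 2 * a := by positivity
    nlinarith
  rw [err, norm_div, norm_neg, norm_mul, Complex.norm_I, mul_one, Complex.norm_real,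
    Real.norm_eq_abs, norm_pow, ← div_eq_mul_inv, div_le_div_iff₀ (by positivity) hb]
  calc _ ≤ 3 * ‖den t a p‖ * (2 * ‖den t a p‖) := by gcongr; linarith
    _ = _ := by ring

lemma integrable_inv_one_add_mul_sq {b : ℝ} (hb : 0 < b) (a : ℝ) :
    Integrable fun p : ℝ => (1 + b * (p - a) ^ 2)⁻¹ := by
  have h := (integrable_inv_one_add_sq.comp_mul_left' (Real.sqrt_pos.2 hb).ne').comp_sub_right a
  simpa only [mul_pow, Real.sq_sqrt hb.le] using h

lemma integral_inv_one_add_mul_sq {b : ℝ} (hb : 0 < b) (a : ℝ) :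
    ∫ p : ℝ, (1 + b * (p - a) ^ 2)⁻¹ = Real.pi / Real.sqrt b := by
  have h := Measure.integral_comp_mul_left (fun r : ℝ => (1 + r ^ 2)⁻¹) (Real.sqrt b)
  rw [integral_univ_inv_one_add_sq, abs_of_nonneg (by positivity)] at h
  simp only [mul_pow, Real.sq_sqrt hb.le, smul_eq_mul] at h
  rw [integral_sub_right_eq_self (fun p : ℝ => (1 + b * p ^ 2)⁻¹) a, h]
  ring

lemma integrable_sqrt_abs_mul_inv_one_add_sq :
    Integrable fun r : ℝ => Real.sqrt |r| * (1 + r ^ 2)⁻¹ := by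
  have h : Integrable fun r : ℝ => ((1 : ℝ) + ‖r‖ ^ 2) ^ (-(3 / 2 : ℝ) / 2) :=
    integrable_rpow_neg_one_add_norm_sq (by norm_num)
  refine h.mono' ?_ (Eventually.of_forall fun r => ?_)
  · refine Continuous.aestronglyMeasurable ?_
    exact (by fun_prop : Continuous fun r : ℝ => Real.sqrt |r|).mul
      (Continuous.inv₀ (by fun_prop) fun r => by positivity)
  · have hpos : (0 : ℝ) < 1 + r ^ 2 := by positivity
    rw [Real.norm_of_nonneg (by positivity), Real.norm_eq_abs, sq_abs,
      show (-(3 / 2 : ℝ) / 2) = 1 / 4 + -1 by norm_num, Real.rpow_add hpos, Real.rpow_neg_one]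
    gcongr
    have h4 : (1 + r ^ 2) ^ (1 / 4 : ℝ) = Real.sqrt (Real.sqrt (1 + r ^ 2)) := by
      rw [Real.sqrt_eq_rpow, Real.sqrt_eq_rpow, ← Real.rpow_mul hpos.le]
      norm_num
    rw [h4]
    exact Real.sqrt_le_sqrt (Real.abs_le_sqrt (by linarith))

lemma sqrt_abs_comp_eq {b : ℝ} (hb : 0 < b) (p : ℝ) :
    Real.sqrt |p| * (1 + b * p ^ 2)⁻¹ =
      b ^ (-(1 / 4) : ℝ) * (Real.sqrt |Real.sqrt b * p| * (1 + (Real.sqrt b * p) ^ 2)⁻¹) := by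
  have h4 : Real.sqrt (Real.sqrt b) = b ^ (1 / 4 : ℝ) := by
    rw [Real.sqrt_eq_rpow, Real.sqrt_eq_rpow, ← Real.rpow_mul hb.le]
    norm_num
  rw [abs_mul, abs_of_nonneg (Real.sqrt_nonneg b), Real.sqrt_mul (Real.sqrt_nonneg b), h4,
    mul_pow, Real.sq_sqrt hb.le, Real.rpow_neg hb.le]
  have : b ^ (1 / 4 : ℝ) ≠ 0 := (Real.rpow_pos_of_pos hb _).ne'
  field_simp

lemma integrable_sqrt_abs_mul_inv_one_add_mul_sq {b : ℝ} (hb : 0 < b) (a : ℝ) :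
    Integrable fun p : ℝ => Real.sqrt |p - a| * (1 + b * (p - a) ^ 2)⁻¹ := by
  have h := (integrable_sqrt_abs_mul_inv_one_add_sq.comp_mul_left'
    (Real.sqrt_pos.2 hb).ne').const_mul (b ^ (-(1 / 4) : ℝ))
  simp only [← sqrt_abs_comp_eq hb] at h
  exact h.comp_sub_right a

lemma integral_sqrt_abs_mul_inv_one_add_mul_sq {b : ℝ} (hb : 0 < b) (a : ℝ) :
    ∫ p : ℝ, Real.sqrt |p - a| * (1 + b * (p - a) ^ 2)⁻¹ =
      b ^ (-(3 / 4) : ℝ) * ∫ r : ℝ, Real.sqrt |r| * (1 + r ^ 2)⁻¹ := by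
  rw [integral_sub_right_eq_self (fun p : ℝ => Real.sqrt |p| * (1 + b * p ^ 2)⁻¹) a]
  simp only [sqrt_abs_comp_eq hb]
  rw [integral_const_mul, Measure.integral_comp_mul_left
    (fun r : ℝ => Real.sqrt |r| * (1 + r ^ 2)⁻¹), abs_of_nonneg (by positivity), smul_eq_mul,
    ← mul_assoc, Real.sqrt_eq_rpow, ← Real.rpow_neg hb.le, ← Real.rpow_add hb]
  norm_num

lemma dL2_eq {w : ℝ → ℂ} (hw : MemE w) :
    dL2 w = Real.sqrt (∫ p in Ioi (0 : ℝ), ‖deriv w p‖ ^ 2) := by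
  rw [dL2, hw.derivL2.eLpNorm_eq_integral_rpow_norm (by norm_num) (by norm_num),
    ENNReal.toReal_ofReal (by positivity), Real.sqrt_eq_rpow]
  norm_num

lemma dL2_nonneg (w : ℝ → ℂ) : 0 ≤ dL2 w := ENNReal.toReal_nonneg

lemma norm_le_supN {w : ℝ → ℂ} (hw : MemE w) (p : ℝ) : ‖w p‖ ≤ supN w := le_ciSup hw.bdd p

lemma supN_nonneg {w : ℝ → ℂ} (hw : MemE w) : 0 ≤ supN w :=
  (norm_nonneg _).trans (norm_le_supN hw 0)

/-- Cauchy–Schwarz against the derivative of a profile. -/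
lemma setIntegral_mul_norm_deriv_le {w : ℝ → ℂ} (hw : MemE w) {S : Set ℝ} (hS : S ⊆ Ioi 0)
    {h : ℝ → ℂ} (hh : MemLp h 2 (volume.restrict S)) :
    ∫ p in S, ‖h p‖ * ‖deriv w p‖ ≤ Real.sqrt (∫ p in S, ‖h p‖ ^ 2) * dL2 w := by
  have hw2 : MemLp (deriv w) 2 (volume.restrict S) :=
    hw.derivL2.mono_measure (Measure.restrict_mono hS le_rfl)
  have key := integral_mul_norm_le_Lp_mul_Lq (μ := volume.restrict S) (f := h) (g := deriv w)
    (p := 2) (q := 2) Real.HolderConjugate.two_two (by simpa using hh) (by simpa using hw2)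
  simp only [Real.rpow_two, ← Real.sqrt_eq_rpow] at key
  refine key.trans ?_
  rw [dL2_eq hw]
  gcongr
  · exact Eventually.of_forall fun p => by positivity
  · exact (memLp_two_iff_integrable_sq_norm hw.derivL2.1).1 hw.derivL2

lemma integrableOn_deriv {w : ℝ → ℂ} (hw : MemE w) {c d : ℝ} (hc : 0 < c) :
    IntegrableOn (deriv w) (Ioc c d) := by
  have hS : Ioc c d ⊆ Ioi 0 := fun p hp => hc.trans hp.1
  have hw2 : MemLp (deriv w) 2 (volume.restrict (Ioc c d)) :=
    hw.derivL2.mono_measure (Measure.restrict_mono hS le_rfl)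
  exact hw2.integrable (by norm_num)

lemma norm_profile_sub_le_of_le {w : ℝ → ℂ} (hw : MemE w) {c d : ℝ} (hc : 0 < c) (hcd : c ≤ d) :
    ‖w d - w c‖ ≤ Real.sqrt (d - c) * dL2 w := by
  have hS : Ioc c d ⊆ Ioi 0 := fun p hp => hc.trans hp.1
  have hftc : ∫ p in c..d, deriv w p = w d - w c := by
    refine intervalIntegral.integral_eq_sub_of_hasDerivAt (fun p hp => ?_)
      ((intervalIntegrable_iff_integrableOn_Ioc_of_le hcd).2 (integrableOn_deriv hw hc))
    rw [uIcc_of_le hcd] at hp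
    exact (hw.diff p (hc.trans_le hp.1)).hasDerivAt
  rw [← hftc, intervalIntegral.integral_of_le hcd]
  refine (norm_integral_le_integral_norm _).trans ?_
  have h := setIntegral_mul_norm_deriv_le hw hS (h := fun _ => 1) (memLp_const 1)
  simpa [Measure.real, ENNReal.toReal_ofReal (sub_nonneg.2 hcd)] using h

lemma norm_profile_sub_le {w : ℝ → ℂ} (hw : MemE w) {c d : ℝ} (hc : 0 < c) (hd : 0 < d) :
    ‖w d - w c‖ ≤ Real.sqrt |d - c| * dL2 w := by
  rcases le_total c d with h | h
  · rw [abs_of_nonneg (sub_nonneg.2 h)]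
    exact norm_profile_sub_le_of_le hw hc h
  · rw [abs_sub_comm, abs_of_nonneg (sub_nonneg.2 h), norm_sub_rev]
    exact norm_profile_sub_le_of_le hw hd h

lemma integrableOn_err {t a : ℝ} (ht : 0 < t) (ha : 0 < a) : IntegrableOn (err t a) (Ioi 0) := by
  refine ((integrable_inv_one_add_mul_sq (mul_pos ht ha) a).const_mul 6).integrableOn.mono'
    (continuous_err t a).aestronglyMeasurable ?_
  exact (ae_restrict_mem measurableSet_Ioi).mono fun p hp => norm_err_le ht ha (le_of_lt hp)

lemma tendsto_prim_atTop {t x a : ℝ} (ht : 0 < t) (ha : 0 < a) :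
    Tendsto (prim t x a) atTop (𝓝 0) := by
  have hlim : Tendsto (fun p : ℝ => (t * a * (p - a))⁻¹) atTop (𝓝 0) :=
    tendsto_inv_atTop_zero.comp (Tendsto.const_mul_atTop (mul_pos ht ha)
      (tendsto_atTop_add_const_right _ (-a) tendsto_id))
  refine squeeze_zero_norm' ?_ hlim
  filter_upwards [eventually_gt_atTop a] with p hp
  have hpa : 0 < p - a := sub_pos.2 hp
  have h0 : 0 < ‖den t a p‖ := norm_pos_iff.2 (den_ne_zero t a p)
  rw [norm_prim, abs_of_pos hpa, div_le_iff₀ h0, ← div_eq_inv_mul, le_div_iff₀ (by positivity)]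
  have h2 := le_norm_den t a p
  have h3 : 0 ≤ t * (p - a) ^ 2 * a := by positivity
  have h4 : 0 ≤ t * (p - a) ^ 2 * p := by have := ha.trans hp; positivity
  nlinarith

/-- The improper Airy-type integral converges. -/
lemma exists_tendsto_integral_osc {t x a : ℝ} (ht : 0 < t) (ha : 0 < a)
    (hx : x = -3 * t * a ^ 2) :
    ∃ l : ℂ, Tendsto (fun R => ∫ p in (0 : ℝ)..R, osc t x p) atTop (𝓝 l) := by
  have hint : IntegrableOn (fun p => osc t x p * err t a p) (Ioi 0) := by
    exact (integrableOn_err ht ha).bdd_mul (continuous_osc t x).aestronglyMeasurable (c := 1)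
      (Eventually.of_forall fun p => (norm_osc t x p).le)
  have hid : ∀ R : ℝ, ∫ p in (0 : ℝ)..R, osc t x p =
      prim t x a R - prim t x a 0 - ∫ p in (0 : ℝ)..R, osc t x p * err t a p := by
    intro R
    have hc1 : Continuous fun p => osc t x p * err t a p :=
      (continuous_osc t x).mul (continuous_err t a)
    have h := intervalIntegral.integral_eq_sub_of_hasDerivAt (a := 0) (b := R)
      (fun p _ => hasDerivAt_prim hx p)
      (by
        simp only [mul_add, mul_one]
        exact ((continuous_osc t x).add hc1).intervalIntegrable _ _)
    simp only [mul_add, mul_one] at h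
    rw [intervalIntegral.integral_add ((continuous_osc t x).intervalIntegrable _ _)
      (hc1.intervalIntegrable _ _)] at h
    rw [← h]
    ring
  simp only [hid]
  exact ⟨_, ((tendsto_prim_atTop ht ha).sub_const _).sub
    (intervalIntegral_tendsto_integral_Ioi 0 hint tendsto_id)⟩

lemma AiP_eq {t x : ℝ} (ht : 0 < t) {R : ℝ} (hR : 0 ≤ R) :
    AiP (x / t ^ (1 / 3 : ℝ)) (t ^ (1 / 3 : ℝ) * R) =
      ((t ^ (1 / 3 : ℝ) / Real.pi : ℝ) : ℂ) * ∫ p in (0 : ℝ)..R, osc t x p := by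
  set τ := t ^ (1 / 3 : ℝ) with hτ
  have hτ0 : 0 < τ := Real.rpow_pos_of_pos ht _
  have hτ3 : τ ^ 3 = t := by
    rw [hτ, ← Real.rpow_natCast, ← Real.rpow_mul ht.le]; norm_num
  have h := intervalIntegral.integral_comp_mul_left (a := 0) (b := R)
    (fun p : ℝ => Complex.exp (Complex.I * ((p * (x / τ) + p ^ 3 : ℝ) : ℂ))) hτ0.ne'
  have he : ∀ p : ℝ, Complex.exp (Complex.I * ((τ * p * (x / τ) + (τ * p) ^ 3 : ℝ) : ℂ))
      = osc t x p := by
    intro p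
    rw [osc, mul_pow, hτ3]
    congr 3
    field_simp
  simp only [he] at h
  rw [AiP, ← intervalIntegral.integral_of_le (by positivity), h, mul_zero, Complex.real_smul]
  generalize (∫ p in (0 : ℝ)..τ * R,
    Complex.exp (Complex.I * ((p * (x / τ) + p ^ 3 : ℝ) : ℂ))) = J
  have : (τ : ℂ) ≠ 0 := by exact_mod_cast hτ0.ne'
  push_cast
  field_simp

lemma AiFock_eq {t x : ℝ} (ht : 0 < t) {l : ℂ}
    (hl : Tendsto (fun R => ∫ p in (0 : ℝ)..R, osc t x p) atTop (𝓝 l)) :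
    AiFock (x / t ^ (1 / 3 : ℝ)) = ((t ^ (1 / 3 : ℝ) / Real.pi : ℝ) : ℂ) * l := by
  have hτ0 : 0 < t ^ (1 / 3 : ℝ) := Real.rpow_pos_of_pos ht _
  refine Tendsto.limUnder_eq ?_
  have h1 : Tendsto (fun R : ℝ => (t ^ (1 / 3 : ℝ))⁻¹ * R) atTop atTop :=
    Tendsto.const_mul_atTop (inv_pos.2 hτ0) tendsto_id
  refine ((hl.comp h1).const_mul _).congr' ?_
  filter_upwards [eventually_ge_atTop 0] with R hR
  rw [Function.comp_apply, ← AiP_eq ht (by positivity), mul_inv_cancel_left₀ hτ0.ne']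

lemma memLp_prim (t x a c d : ℝ) : MemLp (prim t x a) 2 (volume.restrict (Ioc c d)) := by
  rw [memLp_two_iff_integrable_sq_norm (continuous_prim t x a).aestronglyMeasurable]
  exact ((continuous_prim t x a).norm.pow 2).integrableOn_Ioc

lemma sqrt_integral_norm_prim_sq_le {t x a c d : ℝ} (ht : 0 < t) (ha : 0 < a) (hc : 0 < c) :
    Real.sqrt (∫ p in Ioc c d, ‖prim t x a p‖ ^ 2) ≤
      2 * Real.sqrt Real.pi * (t * a) ^ (-(3 / 4) : ℝ) := by
  have hb : 0 < t * a := mul_pos ht ha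
  have hint := (integrable_inv_one_add_mul_sq hb a).const_mul (4 / (t * a))
  have hle : ∫ p in Ioc c d, ‖prim t x a p‖ ^ 2 ≤ 4 / (t * a) * (Real.pi / Real.sqrt (t * a)) := by
    rw [← integral_inv_one_add_mul_sq hb a, ← integral_const_mul]
    refine le_trans (setIntegral_mono_on ?_ hint.integrableOn measurableSet_Ioc fun p hp =>
      norm_prim_sq_le ht ha (hc.trans hp.1).le) (setIntegral_le_integral hint
        (Eventually.of_forall fun p => by positivity))
    exact (memLp_two_iff_integrable_sq_norm (memLp_prim t x a c d).1).1 (memLp_prim t x a c d)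
  refine Real.sqrt_le_iff.2 ⟨by positivity, hle.trans_eq ?_⟩
  rw [mul_pow, mul_pow, Real.sq_sqrt Real.pi_pos.le, ← Real.rpow_natCast, ← Real.rpow_natCast,
    ← Real.rpow_mul hb.le, Real.sqrt_eq_rpow, div_mul_div_comm]
  nth_rewrite 1 [← Real.rpow_one (t * a)]
  rw [← Real.rpow_add hb, div_eq_mul_inv, ← Real.rpow_neg hb.le]
  norm_num

/-- Integration by parts for the oscillatory integral of a profile minus a constant. -/
lemma integral_osc_mul_sub_eq {t x a c d : ℝ} (hx : x = -3 * t * a ^ 2) {w : ℝ → ℂ}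
    (hw : MemE w) (k : ℂ) (hc : 0 < c) (hcd : c ≤ d) :
    ∫ p in Ioc c d, osc t x p * (w p - k) =
      prim t x a d * (w d - k) - prim t x a c * (w c - k)
        - (∫ p in Ioc c d, prim t x a p * deriv w p)
        - ∫ p in Ioc c d, osc t x p * err t a p * (w p - k) := by
  have hcont : ContinuousOn (fun p => w p - k) (Icc c d) :=
    (hw.cont.mono fun p hp => hc.trans_le hp.1).sub continuousOn_const
  have hd : ∀ p ∈ uIcc c d, HasDerivAt (fun p => prim t x a p * (w p - k))
      (osc t x p * (1 + err t a p) * (w p - k) + prim t x a p * deriv w p) p := by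
    intro p hp
    rw [uIcc_of_le hcd] at hp
    exact (hasDerivAt_prim hx p).mul
      ((hw.diff p (hc.trans_le hp.1)).hasDerivAt.sub_const k)
  have i1 : IntegrableOn (fun p => osc t x p * (w p - k)) (Ioc c d) :=
    (((continuous_osc t x).continuousOn.mul hcont).integrableOn_Icc).mono_set Ioc_subset_Icc_self
  have i2 : IntegrableOn (fun p => osc t x p * err t a p * (w p - k)) (Ioc c d) :=
    (((((continuous_osc t x).mul (continuous_err t a)).continuousOn.mul
      hcont).integrableOn_Icc)).mono_set Ioc_subset_Icc_self
  have i3 : IntegrableOn (fun p => prim t x a p * deriv w p) (Ioc c d) :=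
    MemLp.integrable_mul (memLp_prim t x a c d)
      (hw.derivL2.mono_measure (Measure.restrict_mono (fun p hp => hc.trans hp.1) le_rfl))
  have e : (fun p => osc t x p * (1 + err t a p) * (w p - k) + prim t x a p * deriv w p) =
      fun p => osc t x p * (w p - k) + osc t x p * err t a p * (w p - k)
        + prim t x a p * deriv w p := by
    funext p; ring
  have i12 : IntegrableOn (fun p => osc t x p * (w p - k) + osc t x p * err t a p * (w p - k))
      (Ioc c d) := i1.add i2
  have h := intervalIntegral.integral_eq_sub_of_hasDerivAt hd
    ((intervalIntegrable_iff_integrableOn_Ioc_of_le hcd).2 (by rw [e]; exact i12.add i3))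
  rw [e, intervalIntegral.integral_of_le hcd, integral_add i12 i3, integral_add i1 i2] at h
  rw [← h]
  ring

lemma norm_integral_prim_mul_deriv_le {t x a c d : ℝ} (ht : 0 < t) (ha : 0 < a) (hc : 0 < c)
    {w : ℝ → ℂ} (hw : MemE w) :
    ‖∫ p in Ioc c d, prim t x a p * deriv w p‖ ≤
      2 * Real.sqrt Real.pi * (t * a) ^ (-(3 / 4) : ℝ) * dL2 w := by
  refine (norm_integral_le_integral_norm _).trans ?_
  simp only [norm_mul]
  refine (setIntegral_mul_norm_deriv_le hw (fun p hp => hc.trans hp.1)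
    (memLp_prim t x a c d)).trans ?_
  exact mul_le_mul_of_nonneg_right (sqrt_integral_norm_prim_sq_le ht ha hc) (dL2_nonneg w)

lemma norm_integral_err_mul_le {t x a c d : ℝ} (ht : 0 < t) (ha : 0 < a) (hc : 0 < c)
    {w : ℝ → ℂ} (hw : MemE w) :
    ‖∫ p in Ioc c d, osc t x p * err t a p * (w p - w a)‖ ≤
      6 * (∫ r : ℝ, Real.sqrt |r| * (1 + r ^ 2)⁻¹) * (t * a) ^ (-(3 / 4) : ℝ) * dL2 w := by
  have hb : 0 < t * a := mul_pos ht ha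
  have hint := (integrable_sqrt_abs_mul_inv_one_add_mul_sq hb a).const_mul (6 * dL2 w)
  have hD := dL2_nonneg w
  calc ‖∫ p in Ioc c d, osc t x p * err t a p * (w p - w a)‖
      ≤ ∫ p in Ioc c d, 6 * dL2 w * (Real.sqrt |p - a| * (1 + t * a * (p - a) ^ 2)⁻¹) := by
        refine norm_integral_le_of_norm_le hint.integrableOn ?_
        filter_upwards [ae_restrict_mem measurableSet_Ioc] with p hp
        have hp0 : 0 < p := hc.trans hp.1
        rw [norm_mul, norm_mul, norm_osc, one_mul]
        calc ‖err t a p‖ * ‖w p - w a‖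
            ≤ (6 * (1 + t * a * (p - a) ^ 2)⁻¹) * (Real.sqrt |p - a| * dL2 w) :=
              mul_le_mul (norm_err_le ht ha hp0.le) (norm_profile_sub_le hw ha hp0) (norm_nonneg _)
                (by positivity)
          _ = _ := by ring
    _ ≤ ∫ p : ℝ, 6 * dL2 w * (Real.sqrt |p - a| * (1 + t * a * (p - a) ^ 2)⁻¹) :=
        setIntegral_le_integral hint (Eventually.of_forall fun p => by positivity)
    _ = _ := by
        rw [integral_const_mul, integral_sqrt_abs_mul_inv_one_add_mul_sq hb a]
        ring

lemma integrableOn_profile {w : ℝ → ℂ} (hw : MemE w) (R : ℝ) : IntegrableOn w (Ioc 0 R) :=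
  Integrable.of_bound
    ((hw.cont.mono Ioc_subset_Ioi_self).aestronglyMeasurable measurableSet_Ioc) (supN w)
    (Eventually.of_forall fun p => norm_le_supN hw p)

lemma integrableOn_osc_mul_profile {w : ℝ → ℂ} (hw : MemE w) (t x R : ℝ) :
    IntegrableOn (fun p => osc t x p * w p) (Ioc 0 R) :=
  (integrableOn_profile hw R).bdd_mul (continuous_osc t x).aestronglyMeasurable (c := 1)
    (Eventually.of_forall fun p => (norm_osc t x p).le)

lemma integrableOn_osc (t x c d : ℝ) : IntegrableOn (osc t x) (Ioc c d) :=
  (continuous_osc t x).integrableOn_Ioc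

lemma norm_integral_osc_mul_sub_le {t x a R : ℝ} (ht : 0 < t) (ha : 0 < a)
    (hx : x = -3 * t * a ^ 2) {w : ℝ → ℂ} (hw : MemE w) (hR : 2 * a ≤ R) :
    ‖∫ p in Ioc 0 R, osc t x p * (w p - w a)‖ ≤
      6 * supN w / (t * a ^ 2) +
      (2 * Real.sqrt Real.pi + 6 * ∫ r : ℝ, Real.sqrt |r| * (1 + r ^ 2)⁻¹) *
        (t * a) ^ (-(3 / 4) : ℝ) * dL2 w := by
  set c := min (a / 2) (1 / (t * a ^ 2)) with hcdef
  have hc : 0 < c := lt_min (by positivity) (by positivity)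
  have hca : c ≤ a / 2 := min_le_left _ _
  have hc1 : c ≤ 1 / (t * a ^ 2) := min_le_right _ _
  have hcR : c ≤ R := by linarith
  have hM := supN_nonneg hw
  have hg : ∀ p, ‖w p - w a‖ ≤ 2 * supN w := fun p =>
    (norm_sub_le _ _).trans (by linarith [norm_le_supN hw p, norm_le_supN hw a])
  have hi : IntegrableOn (fun p => osc t x p * (w p - w a)) (Ioc 0 R) := by
    simp only [mul_sub]
    exact (integrableOn_osc_mul_profile hw t x R).sub ((integrableOn_osc t x 0 R).mul_const _)
  have hsplit : ∫ p in Ioc 0 R, osc t x p * (w p - w a) =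
      (∫ p in Ioc 0 c, osc t x p * (w p - w a)) + ∫ p in Ioc c R, osc t x p * (w p - w a) := by
    rw [← Ioc_union_Ioc_eq_Ioc hc.le hcR]
    exact setIntegral_union (Ioc_disjoint_Ioc_of_le le_rfl) measurableSet_Ioc
      (hi.mono_set (Ioc_subset_Ioc_right hcR)) (hi.mono_set (Ioc_subset_Ioc_left hc.le))
  have h0 : ‖∫ p in Ioc 0 c, osc t x p * (w p - w a)‖ ≤ 2 * supN w * (1 / (t * a ^ 2)) := by
    refine (norm_setIntegral_le_of_norm_le_const (C := 2 * supN w) (by simp) fun p _ => ?_).trans ?_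
    · rw [norm_mul, norm_osc, one_mul]
      exact hg p
    · rw [Real.volume_real_Ioc_of_le hc.le, sub_zero]
      gcongr
  have hfar : ∀ p, 0 ≤ p → a / 2 ≤ |p - a| →
      ‖prim t x a p * (w p - w a)‖ ≤ 2 * supN w * (1 / (t * a ^ 2)) := fun p hp hpa => by
    rw [norm_mul, mul_comm]
    exact mul_le_mul (hg p) (norm_prim_le_of_far ht ha hp hpa) (norm_nonneg _) (by positivity)
  have h1 := hfar R (by linarith) (by rw [abs_of_nonneg] <;> linarith)
  have h2 := hfar c hc.le (by rw [abs_of_nonpos] <;> linarith)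
  have h3 := norm_integral_prim_mul_deriv_le (x := x) (d := R) ht ha hc hw
  have h4 := norm_integral_err_mul_le (x := x) (d := R) ht ha hc hw
  rw [hsplit, integral_osc_mul_sub_eq hx hw (w a) hc hcR]
  refine (norm_add_le _ _).trans ?_
  refine (add_le_add le_rfl ((norm_sub_le _ _).trans (add_le_add ((norm_sub_le _ _).trans
    (add_le_add (norm_sub_le _ _) le_rfl)) le_rfl))).trans ?_
  have e : 6 * supN w / (t * a ^ 2) = 3 * (2 * supN w * (1 / (t * a ^ 2))) := by ring
  rw [e]
  linarith

lemma abs_sub_airy_le {t x a : ℝ} (ht : 0 < t) (ha : 0 < a) (hx : x = -3 * t * a ^ 2)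
    {w : ℝ → ℂ} (hw : MemE w) {u : ℝ → ℝ} (hu : IsPhys w t u) :
    |u x - t ^ (-(1 / 3 : ℝ)) * (AiFock (x / t ^ (1 / 3 : ℝ)) * w a).re| ≤
      6 * supN w / (t * a ^ 2) +
      (2 * Real.sqrt Real.pi + 6 * ∫ r : ℝ, Real.sqrt |r| * (1 + r ^ 2)⁻¹) *
        (t * a) ^ (-(3 / 4) : ℝ) * dL2 w := by
  obtain ⟨l, hl⟩ := exists_tendsto_integral_osc ht ha hx
  have hAi : t ^ (-(1 / 3 : ℝ)) * (AiFock (x / t ^ (1 / 3 : ℝ)) * w a).re =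
      1 / Real.pi * (l * w a).re := by
    have hτ : t ^ (1 / 3 : ℝ) ≠ 0 := (Real.rpow_pos_of_pos ht _).ne'
    rw [AiFock_eq ht hl, mul_assoc, Complex.re_ofReal_mul, Real.rpow_neg ht.le]
    field_simp
  rw [hAi]
  have hlim := (hu x).sub
    (((Complex.continuous_re.tendsto _).comp (hl.mul_const (w a))).const_mul (1 / Real.pi))
  refine le_of_tendsto hlim.abs ?_
  filter_upwards [eventually_ge_atTop (2 * a)] with R hR
  have h0R : 0 ≤ R := by linarith
  have e : physPartial w t x R - 1 / Real.pi *
      (Complex.re ∘ fun R => (∫ p in (0 : ℝ)..R, osc t x p) * w a) R =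
      1 / Real.pi * (∫ p in Ioc 0 R, osc t x p * (w p - w a)).re := by
    simp only [mul_sub]
    rw [integral_sub (integrableOn_osc_mul_profile hw t x R)
      ((integrableOn_osc t x 0 R).mul_const _), integral_mul_const, Complex.sub_re, mul_sub,
      Function.comp_apply, intervalIntegral.integral_of_le h0R]
    rfl
  rw [e, abs_mul, abs_of_pos (by positivity)]
  have hpi : 1 / Real.pi ≤ 1 := by
    rw [div_le_one Real.pi_pos]; linarith [Real.pi_gt_three]
  refine le_trans ?_ (norm_integral_osc_mul_sub_le ht ha hx hw hR)
  calc _ ≤ 1 * ‖∫ p in Ioc 0 R, osc t x p * (w p - w a)‖ :=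
        mul_le_mul hpi (Complex.abs_re_le_norm _) (abs_nonneg _) zero_le_one
    _ = _ := one_mul _

lemma rpow_neg_le_jap {y : ℝ} (hy : 1 ≤ y) :
    y ^ (-(3 / 10) : ℝ) ≤ 2 * jap y ^ (-(3 / 10) : ℝ) := by
  have hy0 : 0 < y := by linarith
  have hj : jap y ≤ 2 * y := Real.sqrt_le_iff.2 ⟨by positivity, by nlinarith⟩
  have hj0 : 0 < jap y := Real.sqrt_pos.2 (by positivity)
  have h1 : (2 * y) ^ (-(3 / 10) : ℝ) ≤ jap y ^ (-(3 / 10) : ℝ) :=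
    Real.rpow_le_rpow_of_nonpos hj0 hj (by norm_num)
  rw [Real.mul_rpow (by norm_num) hy0.le] at h1
  have h2 : (2 : ℝ)⁻¹ ≤ 2 ^ (-(3 / 10) : ℝ) := by
    rw [← Real.rpow_neg_one]
    exact Real.rpow_le_rpow_of_exponent_le (by norm_num) (by norm_num)
  have h3 := mul_le_mul_of_nonneg_right h2 (Real.rpow_nonneg hy0.le (-(3 / 10) : ℝ))
  linarith

/-- Airy asymptotics on the left. -/
theorem airy_asymptotics_left :
    ∃ C : ℝ, 0 < C ∧
    ∀ t : ℝ, 0 < t → ∀ w : ℝ → ℂ, MemE w →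
    ∀ u : ℝ → ℝ, IsPhys w t u →
      ∀ x : ℝ, x < -t ^ (1 / 3 : ℝ) →
        |u x - t ^ (-(1 / 3 : ℝ)) *
            (AiFock (x / t ^ (1 / 3 : ℝ)) * w (Real.sqrt (|x| / (3 * t)))).re|
          ≤ C * t ^ (-(1 / 3 : ℝ)) * jap (|x| / t ^ (1 / 3 : ℝ)) ^ (-(3 / 10 : ℝ)) *
            EnormP t w := by
  set c₀ := 2 * Real.sqrt Real.pi + 6 * ∫ r : ℝ, Real.sqrt |r| * (1 + r ^ 2)⁻¹ with hc₀
  have hc₀_pos : 0 ≤ c₀ := by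
    have : 0 ≤ ∫ r : ℝ, Real.sqrt |r| * (1 + r ^ 2)⁻¹ := integral_nonneg fun r => by positivity
    positivity
  refine ⟨36 + 6 * c₀, by positivity, fun t ht w hw u hu x hx => ?_⟩
  set τ := t ^ (1 / 3 : ℝ) with hτ
  have hτ0 : 0 < τ := Real.rpow_pos_of_pos ht _
  have hx0 : x < 0 := hx.trans (neg_lt_zero.2 hτ0)
  set y := |x| / τ with hy
  have hxy : |x| = τ * y := by rw [hy]; field_simp
  have hy1 : 1 ≤ y := by
    rw [hy, one_le_div hτ0, abs_of_neg hx0]; linarith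
  have hy0 : 0 < y := by linarith
  set a := Real.sqrt (|x| / (3 * t)) with ha_def
  have hx_pos : 0 < |x| := abs_pos.2 hx0.ne
  have ha : 0 < a := Real.sqrt_pos.2 (by positivity)
  have ha2 : t * a ^ 2 = τ * y / 3 := by
    rw [ha_def, Real.sq_sqrt (by positivity), ← hxy]; field_simp
  have hxa : x = -3 * t * a ^ 2 := by
    have : t * a ^ 2 = -x / 3 := by rw [ha2, ← hxy, abs_of_neg hx0]
    linarith
  have hτinv : t ^ (-(1 / 3 : ℝ)) = τ⁻¹ := Real.rpow_neg ht.le _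
  have hkey : (t * a) ^ (-(3 / 4) : ℝ) ≤
      3 * (t ^ (-(1 / 3 : ℝ)) * t ^ (-(1 / 6 : ℝ)) * y ^ (-(3 / 10) : ℝ)) := by
    have h1 : t * a = (t * (τ * y / 3)) ^ (1 / 2 : ℝ) := by
      rw [← ha2, ← Real.sqrt_eq_rpow, show t * (t * a ^ 2) = (t * a) ^ 2 by ring,
        Real.sqrt_sq (by positivity)]
    have h2 : (t * a) ^ (-(3 / 4) : ℝ) =
        t ^ (-(1 / 3 : ℝ)) * t ^ (-(1 / 6 : ℝ)) * y ^ (-(3 / 8) : ℝ) * 3 ^ (3 / 8 : ℝ) := by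
      have e : t * (τ * y / 3) = t ^ (4 / 3 : ℝ) * y * 3 ^ (-1 : ℝ) := by
        rw [show (4 / 3 : ℝ) = 1 + 1 / 3 by norm_num, Real.rpow_add ht, Real.rpow_one,
          Real.rpow_neg_one]
        ring
      rw [h1, e, ← Real.rpow_mul (by positivity), Real.mul_rpow (by positivity) (by positivity),
        Real.mul_rpow (by positivity) (by positivity), ← Real.rpow_mul ht.le,
        ← Real.rpow_mul (by norm_num), ← Real.rpow_add ht]
      norm_num
    have h3 : y ^ (-(3 / 8) : ℝ) ≤ y ^ (-(3 / 10) : ℝ) :=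
      Real.rpow_le_rpow_of_exponent_le hy1 (by norm_num)
    have h4 : (3 : ℝ) ^ (3 / 8 : ℝ) ≤ 3 := by
      calc (3 : ℝ) ^ (3 / 8 : ℝ) ≤ 3 ^ (1 : ℝ) :=
            Real.rpow_le_rpow_of_exponent_le (by norm_num) (by norm_num)
        _ = 3 := Real.rpow_one 3
    rw [h2]
    calc _ ≤ t ^ (-(1 / 3 : ℝ)) * t ^ (-(1 / 6 : ℝ)) * y ^ (-(3 / 10) : ℝ) * 3 := by gcongr
      _ = _ := by ring
  have hinv : 1 / (t * a ^ 2) ≤ 3 * (t ^ (-(1 / 3 : ℝ)) * y ^ (-(3 / 10) : ℝ)) := by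
    have h3 : y ^ (-1 : ℝ) ≤ y ^ (-(3 / 10) : ℝ) :=
      Real.rpow_le_rpow_of_exponent_le hy1 (by norm_num)
    rw [Real.rpow_neg_one] at h3
    calc 1 / (t * a ^ 2) = 3 * (τ⁻¹ * y⁻¹) := by rw [ha2]; field_simp
      _ ≤ _ := by rw [hτinv]; gcongr
  have hjap := rpow_neg_le_jap hy1
  have hM := supN_nonneg hw
  have hD := dL2_nonneg w
  refine (abs_sub_airy_le ht ha hxa hw hu).trans ?_
  rw [← hc₀]
  set T := t ^ (-(1 / 3 : ℝ)) with hT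
  have hT0 : 0 < T := Real.rpow_pos_of_pos ht _
  set S := t ^ (-(1 / 6 : ℝ)) with hS
  have hS0 : 0 < S := Real.rpow_pos_of_pos ht _
  set J := jap y ^ (-(3 / 10) : ℝ) with hJ
  have hJ0 : 0 ≤ J := by
    rw [hJ, jap]; positivity
  calc 6 * supN w / (t * a ^ 2) + c₀ * (t * a) ^ (-(3 / 4) : ℝ) * dL2 w
      = 6 * supN w * (1 / (t * a ^ 2)) + c₀ * (t * a) ^ (-(3 / 4) : ℝ) * dL2 w := by ring
    _ ≤ 6 * supN w * (3 * (T * (2 * J))) + c₀ * (3 * (T * S * (2 * J))) * dL2 w := by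
        gcongr
        · exact hinv.trans (by gcongr)
        · exact hkey.trans (by gcongr)
    _ ≤ 6 * supN w * (3 * (T * (2 * J))) + c₀ * (3 * (T * S * (2 * J))) * dL2 w
        + (36 * (T * J * (S * dL2 w)) + 6 * c₀ * (T * J * supN w)) :=
        le_add_of_nonneg_right (by positivity)
    _ = (36 + 6 * c₀) * T * J * EnormP t w := by
        rw [EnormP, ← hS]; ring

end MKdVPaper
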